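/- arXiv:2311.06161 — 3 statements merged into one kernel-verified Lean document; each statement's English description precedes it below -/
import Mathlib

section
/- If a finite simple graph G contains a vertex adjacent to every other vertex of G (a full degree vertex), then χ_i(G) = χ(G). -/
/-!  Common definitions: irredundance, irredundance coloring,
irredundance compelling coloring, and related graph parameters. -/

variable {V : Type*}

/-- The closed neighborhood `N[v]` of a vertex `v`. -/
def closedNbr (G : SimpleGraph V) (v : V) : Set V := insert v (G.neighborSet v)

/-- The private neighbor set `pn[v,S] = N[v] − N[S − {v}]`. -/
def pnSet (G : SimpleGraph V) (S : Set V) (v : V) : Set V :=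
  closedNbr G v \ ⋃ w ∈ S \ {v}, closedNbr G w

/-- A set `S` is irredundant if every vertex of `S` has a private neighbor. -/
def IsIrredundant (G : SimpleGraph V) (S : Set V) : Prop :=
  ∀ v ∈ S, (pnSet G S v).Nonempty

/-- A maximal irredundant set: irredundant, and adding any outside vertex
destroys irredundance. -/
def IsMaxIrredundant (G : SimpleGraph V) (S : Set V) : Prop :=
  IsIrredundant G S ∧ ∀ w ∉ S, ¬ IsIrredundant G (insert w S)

/-- The lower irredundance number `ir(G)`: the minimum cardinality of a
maximal irredundant set. -/
noncomputable def lowerIr (G : SimpleGraph V) : ℕ :=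
  sInf {n | ∃ S : Set V, IsMaxIrredundant G S ∧ S.ncard = n}

/-- A proper coloring of `G` with colors in `Fin k`, viewed as a function. -/
def IsProperColoring (G : SimpleGraph V) {k : ℕ} (C : V → Fin k) : Prop :=
  ∀ u v, G.Adj u v → C u ≠ C v

/-- `G` has an irredundance coloring with `k` colors: a proper coloring
together with a maximal irredundant set whose vertices get distinct colors. -/
def IrredColorable (G : SimpleGraph V) (k : ℕ) : Prop :=
  ∃ C : V → Fin k, IsProperColoring G C ∧
    ∃ R : Set V, IsMaxIrredundant G R ∧ Set.InjOn C R

/-- The irredundance chromatic number `χᵢ(G)`. -/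
noncomputable def irChrom (G : SimpleGraph V) : ℕ := sInf {k | IrredColorable G k}

/-- `S` is a dominating set of `G`. -/
def IsDomSet (G : SimpleGraph V) (S : Set V) : Prop :=
  ∀ v, v ∈ S ∨ ∃ u ∈ S, G.Adj u v

/-- The domination number `γ(G)`. -/
noncomputable def domNum (G : SimpleGraph V) : ℕ :=
  sInf {n | ∃ S : Set V, IsDomSet G S ∧ S.ncard = n}

/-- `G` has a gamma coloring with `k` colors: a proper coloring together with
a dominating set whose vertices get distinct colors. -/
def GammaColorable (G : SimpleGraph V) (k : ℕ) : Prop :=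
  ∃ C : V → Fin k, IsProperColoring G C ∧
    ∃ D : Set V, IsDomSet G D ∧ Set.InjOn C D

/-- The gamma chromatic number `χ_γ(G)`. -/
noncomputable def gammaChrom (G : SimpleGraph V) : ℕ := sInf {k | GammaColorable G k}

/-- A rainbow committee of the coloring `C`: a set containing exactly one
vertex of each color class. -/
def IsRainbowCommittee {k : ℕ} (C : V → Fin k) (T : Set V) : Prop :=
  ∀ i : Fin k, ∃! v, v ∈ T ∧ C v = i

/-- `C` is an irredundance compelling coloring of `G` (with all `k` colors
used): a proper coloring, onto its `k` colors, such that every rainbow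
committee is an irredundant set. -/
def IsIRCColoring (G : SimpleGraph V) {k : ℕ} (C : V → Fin k) : Prop :=
  IsProperColoring G C ∧ Function.Surjective C ∧
    ∀ T : Set V, IsRainbowCommittee C T → IsIrredundant G T

/-- `G` admits an irredundance compelling coloring. -/
def IRCColorable (G : SimpleGraph V) : Prop :=
  ∃ (k : ℕ) (C : V → Fin k), IsIRCColoring G C

/-- The irredundance compelling chromatic number `χ_irc(G)`: the maximum
number of colors among all irredundance compelling colorings of `G`. -/
noncomputable def ircChrom (G : SimpleGraph V) : ℕ :=
  sSup {k | ∃ C : V → Fin k, IsIRCColoring G C}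

/-- `G` has a dominator coloring with `k` colors: a proper coloring, onto its
`k` colors, in which every vertex dominates some color class. -/
def DominatorColorable (G : SimpleGraph V) (k : ℕ) : Prop :=
  ∃ C : V → Fin k, IsProperColoring G C ∧ Function.Surjective C ∧
    ∀ v, ∃ i : Fin k, (∀ u, C u = i → G.Adj v u) ∨ {u | C u = i} = {v}

/-- The dominator chromatic number `χ_d(G)`. -/
noncomputable def domChrom (G : SimpleGraph V) : ℕ := sInf {k | DominatorColorable G k}

/-! A full degree vertex `v` dominates `G`, so `{v}` is a maximal irredundant set: any vertex added
to it has no private neighbor. A one-element set gets distinct colors in every coloring, so every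
proper coloring of `G` is an irredundance coloring. -/

section IrredundanceColoring

variable {G : SimpleGraph V} {S : Set V} {v w x : V} {k : ℕ}

lemma mem_closedNbr_iff : x ∈ closedNbr G v ↔ x = v ∨ G.Adj v x :=
  Iff.rfl

lemma mem_pnSet_iff :
    x ∈ pnSet G S v ↔ x ∈ closedNbr G v ∧ ∀ u ∈ S, u ≠ v → x ∉ closedNbr G u := by
  simp [pnSet]

lemma IsDomSet.exists_mem_closedNbr (hS : IsDomSet G S) (x : V) :
    ∃ u ∈ S, x ∈ closedNbr G u := by
  rcases hS x with hxS | ⟨u, huS, hux⟩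
  · exact ⟨x, hxS, mem_closedNbr_iff.2 (Or.inl rfl)⟩
  · exact ⟨u, huS, mem_closedNbr_iff.2 (Or.inr hux)⟩

lemma IsDomSet.not_isIrredundant_insert (hS : IsDomSet G S) (hw : w ∉ S) :
    ¬ IsIrredundant G (insert w S) := by
  intro hirr
  obtain ⟨x, hx⟩ := hirr w (Set.mem_insert w S)
  obtain ⟨u, huS, hxu⟩ := hS.exists_mem_closedNbr x
  have huw : u ≠ w := ne_of_mem_of_not_mem huS hw
  exact (mem_pnSet_iff.1 hx).2 u (Set.mem_insert_of_mem w huS) huw hxu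

lemma IsIrredundant.isMaxIrredundant_of_isDomSet (hirr : IsIrredundant G S) (hS : IsDomSet G S) :
    IsMaxIrredundant G S :=
  ⟨hirr, fun _ => hS.not_isIrredundant_insert⟩

lemma isIrredundant_singleton (G : SimpleGraph V) (v : V) : IsIrredundant G {v} := by
  rintro _ rfl
  exact ⟨_, mem_pnSet_iff.2 ⟨mem_closedNbr_iff.2 (Or.inl rfl), fun _ hu huv => absurd hu huv⟩⟩

lemma isDomSet_singleton_of_isUniversal (hv : G.IsUniversal v) : IsDomSet G {v} := by
  intro x
  by_cases hvx : v = x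
  · exact Or.inl hvx.symm
  · exact Or.inr ⟨v, rfl, hv hvx⟩

lemma isMaxIrredundant_singleton_of_isUniversal (hv : G.IsUniversal v) : IsMaxIrredundant G {v} :=
  (isIrredundant_singleton G v).isMaxIrredundant_of_isDomSet (isDomSet_singleton_of_isUniversal hv)

lemma IrredColorable.colorable (h : IrredColorable G k) : G.Colorable k := by
  obtain ⟨C, hC, -⟩ := h
  exact ⟨.mk C (hC _ _)⟩

lemma IsMaxIrredundant.irredColorable_iff_colorable (hS : IsMaxIrredundant G S)
    (hsub : S.Subsingleton) : IrredColorable G k ↔ G.Colorable k := by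
  refine ⟨IrredColorable.colorable, ?_⟩
  rintro ⟨C⟩
  exact ⟨C, fun _ _ => C.valid, S, hS, hsub.injOn C⟩

theorem irChrom_eq_chromaticNumber_of_full_degree_vertex_general
    (hG : G.chromaticNumber ≠ ⊤) (hv : G.IsUniversal v) :
    (irChrom G : ℕ∞) = G.chromaticNumber := by
  obtain ⟨n, hn⟩ := SimpleGraph.chromaticNumber_ne_top_iff_exists.1 hG
  have hiff : ∀ k, IrredColorable G k ↔ G.Colorable k := fun _ =>
    (isMaxIrredundant_singleton_of_isUniversal hv).irredColorable_iff_colorable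
      Set.subsingleton_singleton
  simp only [irChrom, hiff, hn.chromaticNumber_eq_sInf]

end IrredundanceColoring

/-- If `G` has a full degree vertex then `χᵢ(G) = χ(G)`. -/
theorem irChrom_eq_chromaticNumber_of_full_degree_vertex
    {V : Type*} [Fintype V] (G : SimpleGraph V)
    (h : ∃ v : V, ∀ u : V, u ≠ v → G.Adj v u) :
    (irChrom G : ℕ∞) = G.chromaticNumber := by
  obtain ⟨v, hv⟩ := h
  exact irChrom_eq_chromaticNumber_of_full_degree_vertex_general
    (SimpleGraph.chromaticNumber_ne_top_iff_exists.2 ⟨_, G.colorable_of_fintype⟩)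
    fun u hvu => hv u hvu.symm
end

section
/- There are infinitely many IRC-colorable graphs with vertex-connectivity 1; that is, for every natural number N there exists a connected finite simple graph G of order greater than N such that G has a cut vertex (vertex-connectivity 1) and G admits an irredundance compelling coloring. -/
/-!  Common definitions: irredundance, irredundance coloring,
irredundance compelling coloring, and related graph parameters. -/

variable {V : Type*}

/-! Windmills of 4-cycles sharing one vertex, the hub, provide the graphs. A windmill with at least
two blades is connected and is cut at its hub, because an edge avoiding the hub stays inside one
blade. It is bipartite with all degrees at least two, and for such a graph the bipartition is
irredundance compelling: a rainbow committee is a pair `{v, w}` from opposite sides, and any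
neighbor `x ≠ w` of `v` lies on the side of `w`, hence is a private neighbor of `v`. -/

section Irredundance

variable {W : Type*} {G : SimpleGraph V} {H : SimpleGraph W} {k : ℕ}

theorem mem_closedNbr {u v : V} : u ∈ closedNbr G v ↔ u = v ∨ G.Adj v u :=
  Iff.rfl

theorem mem_pnSet {S : Set V} {u v : V} :
    u ∈ pnSet G S v ↔ u ∈ closedNbr G v ∧ ∀ w ∈ S, w ≠ v → u ∉ closedNbr G w := by
  simp [pnSet]

theorem map_mem_closedNbr_iff (e : G ≃g H) {u v : V} :
    e u ∈ closedNbr H (e v) ↔ u ∈ closedNbr G v := by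
  simp only [mem_closedNbr, e.injective.eq_iff, e.map_adj_iff]

theorem map_mem_pnSet_iff (e : G ≃g H) {S : Set W} {u v : V} :
    e u ∈ pnSet H S (e v) ↔ u ∈ pnSet G (e ⁻¹' S) v := by
  simp only [mem_pnSet, e.surjective.forall, map_mem_closedNbr_iff, e.injective.ne_iff,
    Set.mem_preimage]

theorem IsIrredundant.of_preimage (e : G ≃g H) {S : Set W} (hS : IsIrredundant G (e ⁻¹' S)) :
    IsIrredundant H S := by
  refine e.surjective.forall.2 fun v hv => ?_
  obtain ⟨u, hu⟩ := hS v hv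
  exact ⟨e u, (map_mem_pnSet_iff e).2 hu⟩

theorem IsRainbowCommittee.injOn {C : V → Fin k} {T : Set V} (hT : IsRainbowCommittee C T) :
    Set.InjOn C T := fun v hv _ hw hvw => (hT (C v)).unique ⟨hv, rfl⟩ ⟨hw, hvw.symm⟩

theorem IsRainbowCommittee.preimage (e : V ≃ W) {C : V → Fin k} {T : Set W}
    (hT : IsRainbowCommittee (C ∘ e.symm) T) : IsRainbowCommittee C (e ⁻¹' T) := fun i =>
  (e.existsUnique_congr fun {v} => by simp).2 (hT i)

theorem IRCColorable.of_iso (e : G ≃g H) (hG : IRCColorable G) : IRCColorable H := by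
  obtain ⟨k, C, hproper, hsurj, hirr⟩ := hG
  exact ⟨k, C ∘ e.symm, fun u v huv => hproper _ _ (e.symm.map_adj_iff.2 huv),
    hsurj.comp e.symm.surjective,
    fun T hT => (hirr _ (hT.preimage e.toEquiv)).of_preimage e⟩

end Irredundance

section TwoColorings

variable {G : SimpleGraph V} {C : V → Fin 2}

theorem IsProperColoring.eq_of_adj_of_ne (hC : IsProperColoring G C) {v w x : V}
    (hvx : G.Adj v x) (hwv : C w ≠ C v) : C x = C w := by
  have hxv : C v ≠ C x := hC v x hvx
  omega

theorem IsProperColoring.surjective (hC : IsProperColoring G C) {v w : V} (hvw : G.Adj v w) :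
    Function.Surjective C := fun i => by
  by_cases hi : C v = i
  · exact ⟨v, hi⟩
  · have hne : C v ≠ C w := hC v w hvw
    exact ⟨w, by omega⟩

theorem IsProperColoring.isIrredundant_of_isRainbowCommittee (hC : IsProperColoring G C)
    (hG : ∀ v, (G.neighborSet v).Nontrivial) {T : Set V} (hT : IsRainbowCommittee C T) :
    IsIrredundant G T := by
  intro v hv
  obtain ⟨w, ⟨hwT, hw⟩, -⟩ := hT (C v + 1)
  have hwv : C w ≠ C v := by omega
  obtain ⟨x, hvx, hxw⟩ := (hG v).exists_ne w
  refine ⟨x, mem_pnSet.2 ⟨Or.inr hvx, fun u hu huv => ?_⟩⟩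
  have hCuv : C u ≠ C v := fun h => huv (hT.injOn hu hv h)
  obtain rfl : u = w := hT.injOn hu hwT (by omega)
  rintro (rfl | hux)
  · exact hxw rfl
  · exact hC u x hux (hC.eq_of_adj_of_ne hvx hwv).symm

theorem IsProperColoring.ircColorable [Nonempty V] (hC : IsProperColoring G C)
    (hG : ∀ v, (G.neighborSet v).Nontrivial) : IRCColorable G := by
  obtain ⟨w, hw⟩ := (hG (Classical.arbitrary V)).nonempty
  exact ⟨2, C, hC, hC.surjective hw, fun _ => hC.isIrredundant_of_isRainbowCommittee hG⟩

end TwoColorings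

section Connectivity

variable {W : Type*} {G : SimpleGraph V} {H : SimpleGraph W}

theorem eq_of_reachable {α : Type*} (f : V → α) (hf : ∀ u v, G.Adj u v → f u = f v) {u v : V}
    (huv : G.Reachable u v) : f u = f v := by
  obtain ⟨p⟩ := huv
  induction p with
  | nil => rfl
  | cons hadj _ ih => exact (hf _ _ hadj).trans ih

theorem connected_induce_ne_iff (e : G ≃g H) (v : V) :
    (H.induce {u | u ≠ e v}).Connected ↔ (G.induce {u | u ≠ v}).Connected := by
  let e' : G.induce {u | u ≠ v} ≃g H.induce {u | u ≠ e v} :=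
    { toEquiv := e.toEquiv.subtypeEquiv fun u => e.injective.ne_iff.symm
      map_rel_iff' := e.map_adj_iff }
  exact e'.connected_iff.symm

end Connectivity

/-- The windmill (Dutch windmill graph): 4-cycles indexed by `ι`, called blades, sharing one vertex.
The hub is `Sum.inl none`, its opposite vertex in blade `i`, the tip, is `Sum.inl (some i)`, and the
two common neighbors of hub and tip are `Sum.inr (i, b)`. The summands of the vertex type are the
two sides of a bipartition. -/
def windmill (ι : Type*) : SimpleGraph (Option ι ⊕ ι × Bool) where
  Adj
    | .inl o, .inr p | .inr p, .inl o => o = none ∨ o = some p.1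
    | _, _ => False
  symm := ⟨by rintro (_ | _) (_ | _) h <;> exact h⟩
  loopless := ⟨by rintro (_ | _) h <;> exact h⟩

namespace windmill

variable {ι : Type*}

theorem adj_hub (p : ι × Bool) : (windmill ι).Adj (.inl none) (.inr p) :=
  Or.inl rfl

theorem adj_tip (i : ι) (b : Bool) : (windmill ι).Adj (.inl (some i)) (.inr (i, b)) :=
  Or.inr rfl

theorem connected : (windmill ι).Connected := by
  refine (SimpleGraph.connected_iff_exists_forall_reachable _).2 ⟨.inl none, ?_⟩
  rintro ((_ | i) | p)
  · rfl
  · exact (adj_hub (i, true)).reachable.trans (adj_tip i true).symm.reachable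
  · exact (adj_hub p).reachable

/-- The blade containing a vertex other than the hub, which lies in every blade and gets the junk
value `none`. -/
def blade : Option ι ⊕ ι × Bool → Option ι :=
  Sum.elim id fun p => some p.1

theorem blade_eq_of_adj {u v : Option ι ⊕ ι × Bool} (huv : (windmill ι).Adj u v)
    (hu : u ≠ .inl none) (hv : v ≠ .inl none) : blade u = blade v := by
  rcases u with o | p <;> rcases v with o' | q
  · exact huv.elim
  · exact huv.resolve_left fun ho => hu (congrArg _ ho)
  · exact (huv.resolve_left fun ho => hv (congrArg _ ho)).symm
  · exact huv.elim

theorem not_connected_induce_ne_hub [Nontrivial ι] :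
    ¬ ((windmill ι).induce {u | u ≠ .inl none}).Connected := by
  obtain ⟨i, j, hij⟩ := exists_pair_ne ι
  intro hconn
  have hreach := hconn.preconnected ⟨.inl (some i), by simp⟩ ⟨.inl (some j), by simp⟩
  have hblade : some i = some j :=
    eq_of_reachable (blade ∘ Subtype.val) (fun u v huv => blade_eq_of_adj huv u.2 v.2) hreach
  exact hij (Option.some_injective ι hblade)

theorem nontrivial_neighborSet [Nonempty ι] (v : Option ι ⊕ ι × Bool) :
    ((windmill ι).neighborSet v).Nontrivial := by
  rcases v with (_ | i) | ⟨i, b⟩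
  · obtain ⟨i⟩ := ‹Nonempty ι›
    exact ⟨.inr (i, true), adj_hub _, .inr (i, false), adj_hub _, by simp⟩
  · exact ⟨.inr (i, true), adj_tip i _, .inr (i, false), adj_tip i _, by simp⟩
  · exact ⟨.inl none, (adj_hub _).symm, .inl (some i), (adj_tip i b).symm, by simp⟩

/-- The bipartition of the windmill as a coloring: the hub and the tips against their common
neighbors. -/
def coloring : Option ι ⊕ ι × Bool → Fin 2 :=
  Sum.elim (fun _ => 0) fun _ => 1

theorem isProperColoring : IsProperColoring (windmill ι) coloring := by
  rintro (_ | _) (_ | _) h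
  · exact h.elim
  · exact Fin.zero_ne_one
  · exact Fin.zero_ne_one.symm
  · exact h.elim

theorem ircColorable [Nonempty ι] : IRCColorable (windmill ι) :=
  isProperColoring.ircColorable nontrivial_neighborSet

theorem card_vertices [Fintype ι] :
    Fintype.card (Option ι ⊕ ι × Bool) = 3 * Fintype.card ι + 1 := by
  simp only [Fintype.card_sum, Fintype.card_option, Fintype.card_prod, Fintype.card_bool]
  omega

end windmill

/-- there are infinitely many IRC-colorable connected graphs
with a cut vertex (vertex-connectivity 1). -/
theorem infinitely_many_IRCColorable_with_cut_vertex (N : ℕ) :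
    ∃ (n : ℕ) (G : SimpleGraph (Fin n)), N < n ∧ G.Connected ∧
      (∃ v : Fin n, ¬ (G.induce {u : Fin n | u ≠ v}).Connected) ∧
      IRCColorable G := by
  let G := windmill (Fin (N + 2))
  let e := G.overFinIso rfl
  have hcard : N < Fintype.card (Option (Fin (N + 2)) ⊕ Fin (N + 2) × Bool) := by
    rw [windmill.card_vertices, Fintype.card_fin]
    omega
  exact ⟨_, G.overFin rfl, hcard, e.connected_iff.1 windmill.connected,
    ⟨e (.inl none), mt (connected_induce_ne_iff e _).1 windmill.not_connected_induce_ne_hub⟩,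
    windmill.ircColorable.of_iso e⟩
end

section
/- For every odd natural number n ≥ 3, the cycle C_n does not admit an irredundance compelling coloring. -/
/-!  Common definitions: irredundance, irredundance coloring,
irredundance compelling coloring, and related graph parameters. -/

variable {V : Type*}

/-!
A set of vertices with distinct colors extends to a rainbow committee, and irredundance passes to
subsets, so in an irredundance compelling coloring every such set is irredundant. A closed
neighborhood with more than one vertex is not irredundant, since its center has no private neighbor.
Hence every neighborhood of a non-isolated vertex repeats a color, and the two neighbors of a vertex
of degree two have the same color. Walking along a cycle two steps at a time therefore preserves the
color, which on an odd cycle forces two adjacent vertices to share a color.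
-/

variable {G : SimpleGraph V}

lemma IsIrredundant.mono {S T : Set V} (hT : IsIrredundant G T) (hST : S ⊆ T) :
    IsIrredundant G S := fun v hv =>
  (hT v (hST hv)).mono <| Set.sdiff_subset_sdiff_right <|
    Set.biUnion_subset_biUnion_left <| Set.sdiff_subset_sdiff_left hST

lemma not_isIrredundant_closedNbr {u v : V} (huv : G.Adj u v) :
    ¬ IsIrredundant G (closedNbr G u) := by
  intro hirr
  obtain ⟨x, hx, hx_not_dominated⟩ := hirr u (Set.mem_insert u _)
  refine hx_not_dominated ?_
  rw [Set.mem_iUnion₂]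
  rcases hx with rfl | hux
  · exact ⟨v, ⟨Or.inr huv, huv.ne'⟩, Or.inr huv.symm⟩
  · exact ⟨x, ⟨Or.inr hux, hux.ne'⟩, Or.inl rfl⟩

section Coloring

variable {k : ℕ} {C : V → Fin k}

lemma isRainbowCommittee_iff_bijOn {T : Set V} :
    IsRainbowCommittee C T ↔ Set.BijOn C T Set.univ := by
  constructor
  · intro hT
    refine ⟨Set.mapsTo_univ C T, fun u hu v hv huv => ?_, fun i _ => (hT i).exists⟩
    exact (hT (C v)).unique ⟨hu, huv⟩ ⟨hv, rfl⟩
  · intro hT i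
    obtain ⟨v, hv, rfl⟩ := hT.surjOn (Set.mem_univ i)
    exact ⟨v, ⟨hv, rfl⟩, fun u hu => hT.injOn hu.1 hv hu.2⟩

lemma exists_isRainbowCommittee_superset (hC : Function.Surjective C) {S : Set V}
    (hS : Set.InjOn C S) : ∃ T, S ⊆ T ∧ IsRainbowCommittee C T := by
  simp only [isRainbowCommittee_iff_bijOn]
  exact hS.bijOn_image.exists_extend (Set.subset_univ _) hC.range_eq.superset

lemma IsProperColoring.injOn_closedNbr {v : V} (hC : IsProperColoring G C)
    (hv : Set.InjOn C (G.neighborSet v)) : Set.InjOn C (closedNbr G v) := by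
  refine (Set.injOn_insert G.notMem_neighborSet_self).2 ⟨hv, ?_⟩
  rintro ⟨u, hvu, hcolor⟩
  exact hC v u hvu hcolor.symm

namespace IsIRCColoring

lemma isIrredundant_of_injOn (hC : IsIRCColoring G C) {S : Set V} (hS : Set.InjOn C S) :
    IsIrredundant G S := by
  obtain ⟨-, hsurj, hirr⟩ := hC
  obtain ⟨T, hST, hT⟩ := exists_isRainbowCommittee_superset hsurj hS
  exact (hirr T hT).mono hST

lemma not_injOn_neighborSet (hC : IsIRCColoring G C) {u v : V} (huv : G.Adj u v) :
    ¬ Set.InjOn C (G.neighborSet u) := fun hinj =>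
  not_isIrredundant_closedNbr huv (hC.isIrredundant_of_injOn (hC.1.injOn_closedNbr hinj))

lemma eq_of_adj_of_encard_neighborSet_le_two (hC : IsIRCColoring G C) {u v w : V}
    (hv : (G.neighborSet v).encard ≤ 2) (hvu : G.Adj v u) (hvw : G.Adj v w) : C u = C w := by
  by_contra hcolor
  have hpair_card : ({u, w} : Set V).encard = 2 := Set.encard_pair (ne_of_apply_ne C hcolor)
  have hpair : {u, w} = G.neighborSet v :=
    (Set.toFinite {u, w}).eq_of_subset_of_encard_le (Set.pair_subset hvu hvw)
      (hv.trans_eq hpair_card.symm)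
  refine hC.not_injOn_neighborSet hvu ?_
  rw [← hpair, Set.injOn_pair]
  exact fun h => absurd h hcolor

end IsIRCColoring

end Coloring

lemma apply_eq_of_even_length_walk {α : Type*} {f : V → α} {u v : V} (p : G.Walk u v)
    (hf : ∀ x ∈ p.support, ∀ y z, G.Adj x y → G.Adj x z → f y = f z) (hp : Even p.length) :
    f u = f v := by
  match p with
  | .nil => rfl
  | .cons _ .nil => simp at hp
  | .cons (v := x) hux (.cons (v := y) hxy q) =>
    have hq : Even q.length := by simpa [Nat.even_add_one] using hp
    calc
      f u = f y := hf x (by simp) u y hux.symm hxy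
      _ = f v := apply_eq_of_even_length_walk q (fun z hz => hf z (by simp [hz])) hq

theorem odd_cycle_not_IRCColorable_general {u : V} (p : G.Walk u u) (hodd : Odd p.length)
    (hdeg : ∀ v ∈ p.support, (G.neighborSet v).encard ≤ 2) : ¬ IRCColorable G := by
  rintro ⟨k, C, hC⟩
  cases p with
  | nil => simp at hodd
  | @cons _ v _ huv q =>
    have hq : Even q.length := by simpa [Nat.odd_add_one] using hodd
    have hcolor : C v = C u := apply_eq_of_even_length_walk q (fun x hx _ _ =>
      hC.eq_of_adj_of_encard_neighborSet_le_two (hdeg x (by simp [hx]))) hq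
    exact hC.1 u v huv hcolor.symm

/-- odd cycles are not IRC-colorable. -/
theorem odd_cycle_not_IRCColorable (n : ℕ) (hn : 3 ≤ n) (hodd : Odd n) :
    ¬ IRCColorable (SimpleGraph.cycleGraph n) := by
  obtain ⟨m, rfl⟩ := Nat.exists_eq_add_of_le' hn
  refine odd_cycle_not_IRCColorable_general (SimpleGraph.cycleGraph.cycle m) (by simpa) ?_
  intro v _
  rw [SimpleGraph.cycleGraph_neighborSet]
  exact (Set.encard_insert_le _ _).trans_eq (by rw [Set.encard_singleton, one_add_one_eq_two])
end
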